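/- arXiv:1404.1056 — 2 statements merged into one kernel-verified Lean document; each statement's English description precedes it below -/
import Mathlib

section
/- For k = 3 and every input list L, First Fit with cardinality constraint k satisfies FF(L) ≤ (11/6)·OPT(L). That is, the absolute competitive ratio of First Fit for k = 3 is at most 11/6. -/
/-!
The proof distributes weight `1` over the items of every First Fit bin and shows that the bins of an
arbitrary feasible packing carry weight at most `11/6` on average.

An item alone in its First Fit bin (a *single*) has weight `1`, an item of a three-item bin has
weight `1/3`. In a two-item bin with an item larger than `1/2`, the larger item has weight `2/3` and
the other `1/3`; in any other two-item bin both items have weight `1/2`. First Fit guarantees that a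
bin with at most two items, together with any item of a later bin, has total size more than `1`.
Hence two singles never fit together, and at most one single `z` has size at most `1/2`.

Let `B` be a bin of the feasible packing. If `B` does not consist of a single and two further items,
its weight is at most `5/3` (`weight_le_or_triple`). If its single is larger than `1/2`, the weight
is at most `1 + 1/2 + 1/3 = 11/6`, since two items of weight `1/2` do not fit beside such a single
(`no_two_halves`). The only bin that can exceed `11/6` is therefore the one containing `z`; its
weight is at most `2` (`pair_weight_le_one`), and if it exceeds `11/6`, then the First Fit partner
of one of its items lies in another bin whose weight is at most `5/3` (`exists_light_bin`), so
that these two bins together carry at most `11/3`.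
-/

open scoped Classical
noncomputable section

/-- An input is a list of item sizes, each in (0,1]. -/
def ValidInput (L : List ℝ) : Prop := ∀ x ∈ L, 0 < x ∧ x ≤ 1

/-- A packing assigns a bin index to each item; it is feasible for cardinality
constraint `k` if every bin receives at most `k` items of total size at most 1. -/
def IsFeasible (k : ℕ) (L : List ℝ) (f : Fin L.length → ℕ) : Prop :=
  ∀ b : ℕ,
    (Finset.univ.filter (fun i => f i = b)).card ≤ k ∧
    ∑ i ∈ Finset.univ.filter (fun i => f i = b), L.get i ≤ 1

/-- The number of bins used by a packing. -/
def binsUsed (L : List ℝ) (f : Fin L.length → ℕ) : ℕ :=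
  (Finset.univ.image f).card

/-- The optimal (minimum) number of bins in a feasible packing of `L`. -/
def OPT (k : ℕ) (L : List ℝ) : ℕ :=
  sInf {n | ∃ f : Fin L.length → ℕ, IsFeasible k L f ∧ binsUsed L f = n}

/-- A deterministic online algorithm is a strategy: given the items seen so far
(ending with the item to be packed), it returns the bin index for that item. -/
def onlinePacking (A : List ℝ → ℕ) (L : List ℝ) : Fin L.length → ℕ :=
  fun i => A (L.take (i.1 + 1))

/-- The strategy `A` is a valid online algorithm for cardinality constraint `k`
if on every valid input the induced packing is feasible. -/
def OnlineValid (k : ℕ) (A : List ℝ → ℕ) : Prop :=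
  ∀ L : List ℝ, ValidInput L → IsFeasible k L (onlinePacking A L)

/-- The number of bins used by online algorithm `A` on input `L`. -/
def onlineBins (A : List ℝ → ℕ) (L : List ℝ) : ℕ :=
  binsUsed L (onlinePacking A L)

/-- The state of First Fit: a list of open bins (in order of opening),
each recorded as (number of items, total size). `ffFind` returns the index of
the first bin that can receive an item of size `x` (it has at most `k-1` items
and the item fits); if none, the index of a new bin. -/
def ffFind (k : ℕ) (x : ℝ) : List (ℕ × ℝ) → ℕ
  | [] => 0
  | b :: bs => if b.1 < k ∧ b.2 + x ≤ 1 then 0 else ffFind k x bs + 1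

/-- Update the First Fit state after packing an item of size `x`. -/
def ffUpdate (k : ℕ) (x : ℝ) : List (ℕ × ℝ) → List (ℕ × ℝ)
  | [] => [(1, x)]
  | b :: bs =>
      if b.1 < k ∧ b.2 + x ≤ 1 then (b.1 + 1, b.2 + x) :: bs
      else b :: ffUpdate k x bs

/-- The final state of First Fit with cardinality constraint `k` on input `L`. -/
def ffState (k : ℕ) (L : List ℝ) : List (ℕ × ℝ) :=
  L.foldl (fun bs x => ffUpdate k x bs) []

/-- The number of bins used by First Fit with cardinality constraint `k` on `L`. -/
def FF (k : ℕ) (L : List ℝ) : ℕ := (ffState k L).length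

/-- The bin index into which First Fit packs the `i`-th item of `L`. -/
def ffAssign (k : ℕ) (L : List ℝ) (i : Fin L.length) : ℕ :=
  ffFind k (L.get i) (ffState k (L.take i.1))

open Finset

/-! ### First Fit packings and item weights -/

section Weights

variable {ι : Type*} [Fintype ι]

/-- The items that the assignment `g` puts into bin `b`. -/
def binOf (g : ι → ℕ) (b : ℕ) : Finset ι := univ.filter (fun i => g i = b)

/-- The properties of a First Fit packing `g` into the bins `0, …, N - 1` with cardinality
constraint `3` that the weight argument uses. The field `later` says that an item fits into no
earlier bin with at most two items, even at the final level of that bin. -/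
structure FFPacking (s : ι → ℝ) (g : ι → ℕ) (N : ℕ) : Prop where
  pos : ∀ i, 0 < s i
  nonempty : ∀ b < N, (binOf g b).Nonempty
  card_le : ∀ b, (binOf g b).card ≤ 3
  sum_le : ∀ b, ∑ i ∈ binOf g b, s i ≤ 1
  later : ∀ t b, b < g t → (binOf g b).card ≤ 2 → 1 < ∑ i ∈ binOf g b, s i + s t

/-- `i` is the only item of its bin. -/
def Single (g : ι → ℕ) (i : ι) : Prop := (binOf g (g i)).card = 1

/-- `i` and `j` are two distinct items that form a complete bin. -/
def Paired (g : ι → ℕ) (i j : ι) : Prop := i ≠ j ∧ g j = g i ∧ binOf g (g i) = {i, j}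

/-- The weight of an item with respect to the packing `g`. -/
def weight (s : ι → ℝ) (g : ι → ℕ) (i : ι) : ℝ :=
  if (binOf g (g i)).card = 1 then 1
  else if (binOf g (g i)).card = 2 then
    if 1 / 2 < s i then 2 / 3
    else if ∃ j ∈ binOf g (g i), 1 / 2 < s j then 1 / 3 else 1 / 2
  else 1 / 3

variable {s : ι → ℝ} {g : ι → ℕ} {N : ℕ}

lemma mem_binOf {i : ι} {b : ℕ} : i ∈ binOf g b ↔ g i = b := by simp [binOf]

lemma Paired.symm {i j : ι} (h : Paired g i j) : Paired g j i := by
  obtain ⟨h1, h2, h3⟩ := h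
  exact ⟨h1.symm, h2.symm, by rw [h2, h3, pair_comm]⟩

lemma Paired.not_single {i j : ι} (h : Paired g i j) : ¬ Single g i := by
  obtain ⟨h1, h2, h3⟩ := h
  rw [Single, h3, card_pair h1]
  norm_num

lemma Paired.sum_le (H : FFPacking s g N) {i j : ι} (h : Paired g i j) : s i + s j ≤ 1 := by
  have := H.sum_le (g i)
  rwa [h.2.2, sum_pair h.1] at this

lemma Paired.later (H : FFPacking s g N) {i j t : ι} (h : Paired g i j) (ht : g i < g t) :
    1 < s i + s j + s t := by
  have := H.later t (g i) ht (by rw [h.2.2, card_pair h.1])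
  rwa [h.2.2, sum_pair h.1] at this

lemma Single.bin_eq {i : ι} (h : Single g i) : binOf g (g i) = {i} := by
  obtain ⟨x, hx⟩ := card_eq_one.1 h
  have : i ∈ binOf g (g i) := mem_binOf.2 rfl
  rw [hx, mem_singleton] at this
  rw [hx, this]

lemma Single.later (H : FFPacking s g N) {i t : ι} (h : Single g i) (ht : g i < g t) :
    1 < s i + s t := by
  have := H.later t (g i) ht (by rw [h]; norm_num)
  rwa [h.bin_eq, sum_singleton] at this

lemma Single.add (H : FFPacking s g N) {i j : ι} (hi : Single g i) (hj : Single g j)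
    (hij : i ≠ j) : 1 < s i + s j := by
  rcases lt_trichotomy (g i) (g j) with h | h | h
  · exact hi.later H h
  · have : j ∈ binOf g (g i) := mem_binOf.2 h.symm
    rw [hi.bin_eq, mem_singleton] at this
    exact absurd this.symm hij
  · linarith [hj.later H h]

lemma Paired.add_single (H : FFPacking s g N) {i j z : ι} (h : Paired g i j) (hz : Single g z) :
    1 < s i + s j + s z := by
  rcases lt_trichotomy (g i) (g z) with h' | h' | h'
  · exact h.later H h'
  · have := h.not_single
    rw [Single, h'] at this
    exact absurd hz this
  · linarith [hz.later H h', H.pos j]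

lemma weight_single {i : ι} (h : Single g i) : weight s g i = 1 := by
  unfold weight
  rw [if_pos (show (binOf g (g i)).card = 1 from h)]

lemma weight_paired {i j : ι} (h : Paired g i j) :
    weight s g i = if 1 / 2 < s i then 2 / 3 else if 1 / 2 < s j then 1 / 3 else 1 / 2 := by
  have hc : (binOf g (g i)).card = 2 := by rw [h.2.2, card_pair h.1]
  unfold weight
  rw [if_neg (by rw [hc]; norm_num), if_pos hc, h.2.2]
  by_cases h1 : 1 / 2 < s i
  · simp only [if_pos h1]
  · simp only [mem_insert, mem_singleton, exists_eq_or_imp, exists_eq_left, h1, false_or]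

lemma weight_cases (g : ι → ℕ) (s : ι → ℝ) {i : ι} (h : ¬ Single g i) :
    weight s g i = 1 / 3 ∨
    (weight s g i = 2 / 3 ∧ 1 / 2 < s i ∧ ∃ j, Paired g i j) ∨
    (weight s g i = 1 / 2 ∧ s i ≤ 1 / 2 ∧ ∃ j, Paired g i j ∧ s j ≤ 1 / 2) := by
  by_cases hc : (binOf g (g i)).card = 2
  · obtain ⟨j, hj⟩ : ∃ j, Paired g i j := by
      obtain ⟨x, y, hxy, hB⟩ := card_eq_two.1 hc
      have hi : i ∈ binOf g (g i) := mem_binOf.2 rfl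
      have hx : x ∈ binOf g (g i) := by simp [hB]
      have hy : y ∈ binOf g (g i) := by simp [hB]
      rw [hB, mem_insert, mem_singleton] at hi
      rw [mem_binOf] at hx hy
      rcases hi with rfl | rfl
      · exact ⟨y, hxy, hy, hB⟩
      · exact ⟨x, hxy.symm, hx, by rw [hB, pair_comm]⟩
    rw [weight_paired hj]
    by_cases h1 : 1 / 2 < s i
    · simp only [if_pos h1]
      exact Or.inr (Or.inl ⟨trivial, h1, j, hj⟩)
    · by_cases h2 : 1 / 2 < s j
      · left
        simp only [if_neg h1, if_pos h2]
      · simp only [if_neg h1, if_neg h2]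
        exact Or.inr (Or.inr ⟨trivial, not_lt.1 h1, j, hj, not_lt.1 h2⟩)
  · left
    unfold weight
    rw [if_neg (show ¬ (binOf g (g i)).card = 1 from h), if_neg hc]

lemma weight_bin (H : FFPacking s g N) {b : ℕ} (hb : b < N) :
    1 ≤ ∑ i ∈ binOf g b, weight s g i := by
  have h0 : 0 < (binOf g b).card := card_pos.2 (H.nonempty b hb)
  have h3 := H.card_le b
  obtain h | h | h : (binOf g b).card = 1 ∨ (binOf g b).card = 2 ∨ (binOf g b).card = 3 := by omega
  · have : ∀ i ∈ binOf g b, weight s g i = 1 := by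
      intro i hi
      have hi' := mem_binOf.1 hi
      exact weight_single (by rw [Single, hi', h])
    rw [sum_congr rfl this]
    simp [h]
  · obtain ⟨x, y, hxy, hB⟩ := card_eq_two.1 h
    have hx : g x = b := mem_binOf.1 (by simp [hB])
    have hy : g y = b := mem_binOf.1 (by simp [hB])
    have hp : Paired g x y := ⟨hxy, by rw [hx, hy], by rw [hx, hB]⟩
    rw [hB, sum_pair hxy, weight_paired hp, weight_paired hp.symm]
    have := hp.sum_le H
    split_ifs <;> linarith
  · have : ∀ i ∈ binOf g b, weight s g i = 1 / 3 := by
      intro i hi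
      have hi' := mem_binOf.1 hi
      unfold weight
      rw [hi', h]
      norm_num
    rw [sum_congr rfl this]
    simp [h]

/-! ### The weight of a feasible bin -/

lemma weight_le (g : ι → ℕ) (s : ι → ℝ) {i : ι} (h : ¬ Single g i) :
    weight s g i ≤ 1 / 2 ∨ (weight s g i = 2 / 3 ∧ 1 / 2 < s i) := by
  rcases weight_cases g s h with h | h | h
  · left; linarith
  · exact Or.inr ⟨h.1, h.2.1⟩
  · left; linarith

/-- A feasible bin of weight more than `5/3` consists of one single and two other items. -/
lemma weight_le_or_triple (H : FFPacking s g N) (B : Finset ι) (hc : B.card ≤ 3)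
    (hs : ∑ i ∈ B, s i ≤ 1) :
    ∑ i ∈ B, weight s g i ≤ 5 / 3 ∨
    ∃ p q r, B = {p, q, r} ∧ p ≠ q ∧ p ≠ r ∧ q ≠ r ∧
      Single g p ∧ ¬ Single g q ∧ ¬ Single g r := by
  obtain h | h | h | h : B.card = 0 ∨ B.card = 1 ∨ B.card = 2 ∨ B.card = 3 := by omega
  · left
    rw [card_eq_zero.1 h]
    norm_num
  · left
    obtain ⟨x, rfl⟩ := card_eq_one.1 h
    rw [sum_singleton]
    by_cases hx : Single g x
    · rw [weight_single hx]; norm_num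
    · rcases weight_le g s hx with h | h <;> linarith
  · left
    obtain ⟨x, y, hxy, rfl⟩ := card_eq_two.1 h
    rw [sum_pair hxy] at hs ⊢
    by_cases hx : Single g x <;> by_cases hy : Single g y
    · linarith [hx.add H hy hxy]
    · rw [weight_single hx]
      rcases weight_le g s hy with h | h <;> linarith
    · rw [weight_single hy]
      rcases weight_le g s hx with h | h <;> linarith
    · rcases weight_le g s hx with h | h <;> rcases weight_le g s hy with h' | h' <;> linarith
  · obtain ⟨x, y, z, hxy, hxz, hyz, rfl⟩ := card_eq_three.1 h
    have e : ∀ u : ι → ℝ, ∑ i ∈ ({x, y, z} : Finset ι), u i = u x + (u y + u z) := by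
      intro u
      rw [sum_insert (by simp [hxy, hxz]), sum_pair hyz]
    rw [e] at hs ⊢
    have px := H.pos x
    have py := H.pos y
    have pz := H.pos z
    by_cases hx : Single g x <;> by_cases hy : Single g y <;> by_cases hz : Single g z
    · linarith [hx.add H hy hxy]
    · linarith [hx.add H hy hxy]
    · linarith [hx.add H hz hxz]
    · exact Or.inr ⟨x, y, z, rfl, hxy, hxz, hyz, hx, hy, hz⟩
    · linarith [hy.add H hz hyz]
    · exact Or.inr ⟨y, x, z, by grind, hxy.symm, hyz, hxz, hy, hx, hz⟩
    · exact Or.inr ⟨z, x, y, by grind, hxz.symm, hyz.symm, hxy, hz, hx, hy⟩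
    · left
      rcases weight_le g s hx with h | h <;> rcases weight_le g s hy with h' | h' <;>
        rcases weight_le g s hz with h'' | h'' <;> linarith

/-- Two items from bins without an item larger than `1/2` do not fit beside a single `p` larger than
`1/2`: if they come from different bins, the partner of the earlier one would be larger than
`1/2`. -/
lemma no_two_halves (H : FFPacking s g N) {p q r q' r' : ι} (hqr : q ≠ r)
    (hp : Single g p) (hp2 : 1 / 2 < s p)
    (hq : Paired g q q') (hq' : s q' ≤ 1 / 2) (hr : Paired g r r') (hr' : s r' ≤ 1 / 2)
    (hsum : s p + (s q + s r) ≤ 1) : False := by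
  rcases lt_trichotomy (g q) (g r) with h | h | h
  · linarith [hq.later H h]
  · have hr1 : r ∈ binOf g (g q) := mem_binOf.2 h.symm
    rw [hq.2.2, mem_insert, mem_singleton] at hr1
    rcases hr1 with h1 | rfl
    · exact hqr h1.symm
    · linarith [hq.add_single H hp]
  · linarith [hr.later H h]

/-- The weight of the two companions of a single in a feasible bin is at most `1`. -/
lemma pair_weight_le_one (H : FFPacking s g N) {z q r : ι} (hz : Single g z)
    (hq : ¬ Single g q) (hr : ¬ Single g r)
    (hsum : s z + (s q + s r) ≤ 1) : weight s g q + weight s g r ≤ 1 := by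
  have pz := H.pos z
  rcases weight_cases g s hq with h | ⟨h, h2, q', hqq⟩ | ⟨h, h2, q', hqq, h3⟩ <;>
    rcases weight_cases g s hr with k | ⟨k, k2, r', hrr⟩ | ⟨k, k2, r', hrr, k3⟩ <;>
    try linarith
  · linarith [hrr.add_single H hz]
  · linarith [hqq.add_single H hz]

/-- A criterion for the bin of `q'` to have weight at most `5/3`, when it is not the bin of the small
single `z`: beside a single, `q'` and its companion have weight at most `2/3`. -/
lemma light_bin_of (H : FFPacking s g N) {f : ι → ℕ}
    (hfc : ∀ b, (binOf f b).card ≤ 3) (hfs : ∀ b, ∑ i ∈ binOf f b, s i ≤ 1)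
    {z q' : ι} {b0 : ℕ} (hz : Single g z) (hz2 : s z ≤ 1 / 2)
    (hzb : f z = b0) (hq : ¬ Single g q') (hb : f q' ≠ b0)
    (key : ∀ p t, Single g p → 1 / 2 < s p → 1 < s p + s z → q' ≠ t →
      ¬ Single g t → s p + (s q' + s t) ≤ 1 → weight s g q' + weight s g t ≤ 2 / 3) :
    ∑ i ∈ binOf f (f q'), weight s g i ≤ 5 / 3 := by
  rcases weight_le_or_triple H _ (hfc (f q')) (hfs (f q')) with h |
    ⟨p, x, y, hB, hpx, hpy, hxy, hp, hx, hy⟩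
  · exact h
  have e : ∀ u : ι → ℝ, ∑ i ∈ binOf f (f q'), u i = u p + (u x + u y) := by
    intro u
    rw [hB, sum_insert (by simp [hpx, hpy]), sum_pair hxy]
  have hs := hfs (f q')
  rw [e] at hs ⊢
  have hpz : p ≠ z := by
    rintro rfl
    have : p ∈ binOf f (f q') := by simp [hB]
    exact hb ((mem_binOf.1 this).symm.trans hzb)
  have hadd := hp.add H hz hpz
  have hq' : q' ∈ binOf f (f q') := mem_binOf.2 rfl
  rw [hB] at hq'
  simp only [mem_insert, mem_singleton] at hq'
  rw [weight_single hp]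
  rcases hq' with rfl | rfl | rfl
  · exact absurd hp hq
  · linarith [key p y hp (by linarith) hadd hxy hy hs]
  · linarith [key p x hp (by linarith) hadd hxy.symm hx (by linarith)]

/-- The case of `exists_light_bin` in which `q` and `r` both have weight `1/2` and the First Fit bin of
`q` precedes that of `r`: the partner of `q` is larger than `z`, so no single fits beside it. -/
lemma light_bin_halves (H : FFPacking s g N) {f : ι → ℕ}
    (hfc : ∀ b, (binOf f b).card ≤ 3) (hfs : ∀ b, ∑ i ∈ binOf f b, s i ≤ 1)
    {z q r q' : ι} {b0 : ℕ} (hz : Single g z) (hz2 : s z ≤ 1 / 2)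
    (hB : binOf f b0 = {z, q, r}) (hsum : s z + (s q + s r) ≤ 1)
    (hqq : Paired g q q') (hlt : g q < g r) :
    f q' ≠ b0 ∧ ∑ i ∈ binOf f (f q'), weight s g i ≤ 5 / 3 := by
  have hzb : f z = b0 := mem_binOf.1 (by simp [hB])
  have hne : f q' ≠ b0 := by
    intro h
    rw [← mem_binOf, hB, mem_insert, mem_insert, mem_singleton] at h
    rcases h with rfl | rfl | rfl
    · exact hqq.symm.not_single hz
    · exact hqq.1 rfl
    · exact hlt.ne hqq.2.1.symm
  refine ⟨hne, light_bin_of H hfc hfs hz hz2 hzb hqq.symm.not_single hne ?_⟩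
  intro p t hp hp2 hpz hqt ht hs
  linarith [hqq.later H hlt, H.pos t]

/-- The case of `exists_light_bin` in which `q` is larger than `1/2`: no item of weight `1/2` fits
beside a single and the First Fit partner of `q`. -/
lemma light_bin_large (H : FFPacking s g N) {f : ι → ℕ}
    (hfc : ∀ b, (binOf f b).card ≤ 3) (hfs : ∀ b, ∑ i ∈ binOf f b, s i ≤ 1)
    {z q r q' : ι} {b0 : ℕ} (hz : Single g z) (hz2 : s z ≤ 1 / 2)
    (hB : binOf f b0 = {z, q, r}) (hsum : s z + (s q + s r) ≤ 1)
    (hqq : Paired g q q') (hq : 1 / 2 < s q) :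
    f q' ≠ b0 ∧ ∑ i ∈ binOf f (f q'), weight s g i ≤ 5 / 3 := by
  have hzb : f z = b0 := mem_binOf.1 (by simp [hB])
  have hne : f q' ≠ b0 := by
    intro h
    rw [← mem_binOf, hB, mem_insert, mem_insert, mem_singleton] at h
    rcases h with rfl | rfl | rfl
    · exact hqq.symm.not_single hz
    · exact hqq.1 rfl
    · linarith [hqq.add_single H hz]
  refine ⟨hne, light_bin_of H hfc hfs hz hz2 hzb hqq.symm.not_single hne ?_⟩
  intro p t hp hp2 hpz hqt ht hs
  have hle := hqq.sum_le H
  have hw : weight s g q' = 1 / 3 := by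
    rw [weight_paired hqq.symm, if_neg (by linarith), if_pos hq]
  have pq := H.pos q'
  have pr := H.pos r
  rcases weight_cases g s ht with h | ⟨h, h2, -⟩ | ⟨h, h2, t', htt, h3⟩
  · linarith
  · linarith
  · exfalso
    rcases lt_trichotomy (g t) (g q) with hlt | heq | hlt
    -- here the partner of `t` would be larger than `p`, hence larger than `1/2`
    · linarith [htt.later H (t := q') (by rw [hqq.2.1]; exact hlt)]
    · have : t ∈ binOf g (g q) := mem_binOf.2 heq
      rw [hqq.2.2, mem_insert, mem_singleton] at this
      rcases this with rfl | rfl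
      · linarith
      · exact hqt rfl
    -- here `q + q' + t > 1` and `p + z > 1` contradict `z + q + r ≤ 1` and `p + q' + t ≤ 1`
    · linarith [hqq.later H hlt]

/-- If the bin `{z, q, r}` of a single `z` of size at most `1/2` has weight more than `11/6`, then
another nonempty bin has weight at most `5/3`. -/
lemma exists_light_bin (H : FFPacking s g N) {f : ι → ℕ}
    (hfc : ∀ b, (binOf f b).card ≤ 3) (hfs : ∀ b, ∑ i ∈ binOf f b, s i ≤ 1)
    {z q r : ι} {b0 : ℕ} (hz : Single g z) (hz2 : s z ≤ 1 / 2)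
    (hqr : q ≠ r) (hqs : ¬ Single g q) (hrs : ¬ Single g r)
    (hB : binOf f b0 = {z, q, r}) (hsum : s z + (s q + s r) ≤ 1)
    (hw : 5 / 6 < weight s g q + weight s g r) :
    ∃ i, f i ≠ b0 ∧ ∑ j ∈ binOf f (f i), weight s g j ≤ 5 / 3 := by
  have hB' : binOf f b0 = {z, r, q} := by rw [hB, pair_comm]
  have hsum' : s z + (s r + s q) ≤ 1 := by linarith
  rcases weight_cases g s hqs with h | ⟨h, h2, q', hqq⟩ | ⟨h, h2, q', hqq, h3⟩
  · rcases weight_cases g s hrs with k | ⟨k, k2, r', hrr⟩ | ⟨k, k2, r', hrr, k3⟩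
    · linarith
    · exact ⟨r', light_bin_large H hfc hfs hz hz2 hB' hsum' hrr k2⟩
    · linarith
  · exact ⟨q', light_bin_large H hfc hfs hz hz2 hB hsum hqq h2⟩
  · rcases weight_cases g s hrs with k | ⟨k, k2, r', hrr⟩ | ⟨k, k2, r', hrr, k3⟩
    · linarith
    · exact ⟨r', light_bin_large H hfc hfs hz hz2 hB' hsum' hrr k2⟩
    · rcases lt_trichotomy (g q) (g r) with hlt | heq | hlt
      · exact ⟨q', light_bin_halves H hfc hfs hz hz2 hB hsum hqq hlt⟩
      · have : r ∈ binOf g (g q) := mem_binOf.2 heq.symm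
        rw [hqq.2.2, mem_insert, mem_singleton] at this
        rcases this with rfl | rfl
        · exact absurd rfl hqr
        · linarith [hqq.add_single H hz]
      · exact ⟨r', light_bin_halves H hfc hfs hz hz2 hB' hsum' hrr hlt⟩

/-- A feasible bin of weight more than `11/6` consists of a single of size at most `1/2` and two other
items. -/
lemma heavy_bin (H : FFPacking s g N) (B : Finset ι) (hc : B.card ≤ 3)
    (hs : ∑ i ∈ B, s i ≤ 1) (hw : 11 / 6 < ∑ i ∈ B, weight s g i) :
    ∃ z q r, B = {z, q, r} ∧ q ≠ r ∧ Single g z ∧ ¬ Single g q ∧ ¬ Single g r ∧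
      s z ≤ 1 / 2 ∧ s z + (s q + s r) ≤ 1 ∧
      ∑ i ∈ B, weight s g i = 1 + (weight s g q + weight s g r) := by
  rcases weight_le_or_triple H B hc hs with h | ⟨p, q, r, rfl, hpq, hpr, hqr, hp, hq, hr⟩
  · linarith
  have e : ∀ u : ι → ℝ, ∑ i ∈ ({p, q, r} : Finset ι), u i = u p + (u q + u r) := by
    intro u
    rw [sum_insert (by simp [hpq, hpr]), sum_pair hqr]
  rw [e] at hs hw
  refine ⟨p, q, r, rfl, hqr, hp, hq, hr, ?_, hs, by rw [e, weight_single hp]⟩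
  rw [weight_single hp] at hw
  by_contra! hp2
  have pq := H.pos q
  have pr := H.pos r
  rcases weight_cases g s hq with h | ⟨h, h2, -⟩ | ⟨h, h2, q', hqq, h3⟩ <;>
    rcases weight_cases g s hr with k | ⟨k, k2, -⟩ | ⟨k, k2, r', hrr, k3⟩ <;>
    try linarith
  exact no_two_halves H hqr hp hp2 hqq h3 hrr k3 hs

/-! ### Comparison with an arbitrary feasible packing -/

/-- Every feasible packing `f` has at least `6/11` times as many bins as the First Fit packing. -/
lemma bins_le (H : FFPacking s g N) (f : ι → ℕ)
    (hfc : ∀ b, (binOf f b).card ≤ 3) (hfs : ∀ b, ∑ i ∈ binOf f b, s i ≤ 1) :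
    (N : ℝ) ≤ 11 / 6 * ((univ.image f).card : ℝ) := by
  set W : ℕ → ℝ := fun b => ∑ i ∈ binOf f b, weight s g i with hW
  have wpos : ∀ i, 0 ≤ weight s g i := by
    intro i
    unfold weight
    split_ifs <;> norm_num
  have h1 : (N : ℝ) ≤ ∑ i, weight s g i := by
    calc (N : ℝ) = ∑ b ∈ range N, (1 : ℝ) := by simp
      _ ≤ ∑ b ∈ range N, ∑ i ∈ binOf g b, weight s g i :=
          sum_le_sum fun b hb => weight_bin H (mem_range.1 hb)
      _ = ∑ i ∈ univ.filter (fun i => g i ∈ range N), weight s g i :=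
          sum_fiberwise_eq_sum_filter _ _ _ _
      _ ≤ ∑ i, weight s g i :=
          sum_le_sum_of_subset_of_nonneg (filter_subset _ _) fun i _ _ => wpos i
  have h2 : ∑ i, weight s g i = ∑ b ∈ univ.image f, W b :=
    (sum_fiberwise_of_maps_to (fun i _ => mem_image_of_mem f (mem_univ i)) _).symm
  have h3 : 11 / 6 * ((univ.image f).card : ℝ) = ∑ b ∈ univ.image f, (11 / 6 : ℝ) := by
    simp [mul_comm]
  rw [h2] at h1
  rw [h3]
  refine h1.trans ?_
  by_cases hall : ∀ b ∈ univ.image f, W b ≤ 11 / 6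
  · exact sum_le_sum hall
  push Not at hall
  obtain ⟨b0, hb0, hW0⟩ := hall
  obtain ⟨z, q, r, hB, hqr, hz, hq, hr, hz2, hsum, hWe⟩ := heavy_bin H _ (hfc b0) (hfs b0) hW0
  have hW0' : W b0 = 1 + (weight s g q + weight s g r) := hWe
  have hle := pair_weight_le_one H hz hq hr hsum
  obtain ⟨i, hib, hi⟩ := exists_light_bin H hfc hfs hz hz2 hqr hq hr hB hsum (by linarith)
  -- a second bin above `11/6` would contain a second single of size at most `1/2`
  have hoth : ∀ b, b ≠ b0 → W b ≤ 11 / 6 := by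
    intro b hb
    by_contra! hWb
    obtain ⟨y, _, _, hB1, -, hy, -, -, hy2, -, -⟩ := heavy_bin H _ (hfc b) (hfs b) hWb
    have hyz : y ≠ z := by
      rintro rfl
      have m1 : f y = b := mem_binOf.1 (by simp [hB1])
      have m0 : f y = b0 := mem_binOf.1 (by simp [hB])
      exact hb (m1.symm.trans m0)
    linarith [hy.add H hz hyz]
  have hib' : f i ∈ (univ.image f).erase b0 :=
    mem_erase.2 ⟨hib, mem_image_of_mem f (mem_univ i)⟩
  rw [← add_sum_erase _ _ hb0, ← add_sum_erase _ _ hib', ← add_sum_erase _ (fun _ => _) hb0,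
    ← add_sum_erase _ (fun _ => _) hib']
  have hrest : ∑ b ∈ ((univ.image f).erase b0).erase (f i), W b ≤
      ∑ b ∈ ((univ.image f).erase b0).erase (f i), (11 / 6 : ℝ) :=
    sum_le_sum fun b hb => hoth b (mem_erase.1 (mem_erase.1 hb).2).1
  have hi' : W (f i) ≤ 5 / 3 := hi
  linarith

end Weights

/-! ### First Fit produces such a packing -/

lemma ffUpdate_getD (k : ℕ) (x : ℝ) (S : List (ℕ × ℝ)) (b : ℕ) :
    (ffUpdate k x S).getD b (0, 0) =
      if b = ffFind k x S then ((S.getD b (0, 0)).1 + 1, (S.getD b (0, 0)).2 + x)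
      else S.getD b (0, 0) := by
  induction S generalizing b with
  | nil => cases b <;> simp [ffUpdate, ffFind]
  | cons c S ih =>
    by_cases h : c.1 < k ∧ c.2 + x ≤ 1
    · cases b <;> simp [ffUpdate, ffFind, h]
    · cases b with
      | zero => simp [ffUpdate, ffFind, h]
      | succ b =>
        have := ih b
        simp only [ffUpdate, ffFind, if_neg h, List.getD_cons_succ, add_left_inj]
        exact this

lemma ffUpdate_length (k : ℕ) (x : ℝ) (S : List (ℕ × ℝ)) :
    (ffUpdate k x S).length = max S.length (ffFind k x S + 1) := by
  induction S with
  | nil => simp [ffUpdate, ffFind]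
  | cons c S ih =>
    by_cases h : c.1 < k ∧ c.2 + x ≤ 1
    · simp [ffUpdate, ffFind, h]
    · simp only [ffUpdate, ffFind, if_neg h, List.length_cons, ih]
      omega

lemma ffFind_le (k : ℕ) (x : ℝ) (S : List (ℕ × ℝ)) : ffFind k x S ≤ S.length := by
  induction S with
  | nil => simp [ffFind]
  | cons c S ih =>
    simp only [ffFind, List.length_cons]
    split_ifs <;> omega

/-- The selected bin can receive the item; a bin not yet opened counts as an empty one. -/
lemma ffFind_fits {k : ℕ} (hk : 0 < k) {x : ℝ} (hx : x ≤ 1) (S : List (ℕ × ℝ)) :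
    (S.getD (ffFind k x S) (0, 0)).1 < k ∧ (S.getD (ffFind k x S) (0, 0)).2 + x ≤ 1 := by
  induction S with
  | nil => simp [hk, hx]
  | cons c S ih =>
    by_cases h : c.1 < k ∧ c.2 + x ≤ 1
    · simp [ffFind, h]
    · simp only [ffFind, if_neg h, List.getD_cons_succ]
      exact ih

lemma not_fits_of_lt_ffFind {k : ℕ} {x : ℝ} {S : List (ℕ × ℝ)} {b : ℕ} (hb : b < ffFind k x S) :
    ¬ ((S.getD b (0, 0)).1 < k ∧ (S.getD b (0, 0)).2 + x ≤ 1) := by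
  induction S generalizing b with
  | nil => simp [ffFind] at hb
  | cons c S ih =>
    by_cases h : c.1 < k ∧ c.2 + x ≤ 1
    · simp [ffFind, h] at hb
    · cases b with
      | zero => simpa using h
      | succ b =>
        simp only [ffFind, if_neg h, add_lt_add_iff_right] at hb
        simpa using ih hb

/-- The First Fit state after the first `n` items, together with the assignment `g` that produced it:
`S` records the cardinality and the level of every bin, with `(0, 0)` beyond its end. -/
structure FFInv (s : ℕ → ℝ) (g : ℕ → ℕ) (n : ℕ) (S : List (ℕ × ℝ)) : Prop where
  state : ∀ b, S.getD b (0, 0) =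
    (((range n).filter (fun i => g i = b)).card, ∑ i ∈ (range n).filter (fun i => g i = b), s i)
  pos : ∀ b < S.length, 0 < (S.getD b (0, 0)).1
  card_le : ∀ b, (S.getD b (0, 0)).1 ≤ 3
  sum_le : ∀ b, (S.getD b (0, 0)).2 ≤ 1
  later : ∀ t < n, ∀ b < g t, (S.getD b (0, 0)).1 ≤ 2 → 1 < (S.getD b (0, 0)).2 + s t

lemma FFInv.step {s : ℕ → ℝ} {g : ℕ → ℕ} {n : ℕ} {S : List (ℕ × ℝ)} (H : FFInv s g n S)
    (hs : 0 < s n) (hs1 : s n ≤ 1) (hg : g n = ffFind 3 (s n) S) :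
    FFInv s g (n + 1) (ffUpdate 3 (s n) S) := by
  have hfit := ffFind_fits (k := 3) (by norm_num) hs1 S
  constructor
  · intro b
    rw [ffUpdate_getD, ← hg, range_add_one, filter_insert, H.state b]
    by_cases hb : b = g n
    · subst hb
      rw [if_pos rfl, if_pos rfl, card_insert_of_notMem (by simp), sum_insert (by simp),
        add_comm (s n)]
    · rw [if_neg hb, if_neg (Ne.symm hb)]
  · intro b hb
    rw [ffUpdate_getD]
    split_ifs with h
    · simp
    · refine H.pos b ?_
      have := ffFind_le 3 (s n) S
      rw [ffUpdate_length] at hb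
      omega
  · intro b
    rw [ffUpdate_getD]
    split_ifs with h
    · subst h
      have := hfit.1
      simp only
      omega
    · exact H.card_le b
  · intro b
    rw [ffUpdate_getD]
    split_ifs with h
    · subst h
      exact hfit.2
    · exact H.sum_le b
  · intro t ht b hb hc
    have key : (S.getD b (0, 0)).1 ≤ 2 → 1 < (S.getD b (0, 0)).2 + s t := by
      intro hc'
      rcases Nat.lt_succ_iff_lt_or_eq.1 ht with h | rfl
      · exact H.later t h b hb hc'
      · rw [hg] at hb
        have := not_fits_of_lt_ffFind hb
        by_contra! hcon
        exact this ⟨by omega, hcon⟩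
    rw [ffUpdate_getD] at hc ⊢
    split_ifs at hc ⊢ with h
    · simp only at hc ⊢
      linarith [key (by omega)]
    · exact key hc

lemma ffState_inv (L : List ℝ) (hL : ValidInput L) (n : ℕ) (hn : n ≤ L.length) :
    FFInv (fun i => L.getD i 0) (fun i => ffFind 3 (L.getD i 0) (ffState 3 (L.take i))) n
      (ffState 3 (L.take n)) := by
  induction n with
  | zero => constructor <;> simp [ffState]
  | succ n ih =>
    have hn' : n < L.length := hn
    have he : L.getD n 0 = L[n] := by simp [hn']
    have hv := hL L[n] (List.getElem_mem hn')
    have hst : ffState 3 (L.take (n + 1)) = ffUpdate 3 (L.getD n 0) (ffState 3 (L.take n)) := by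
      rw [List.take_succ_eq_append_getElem hn', he]
      simp only [ffState, List.foldl_append, List.foldl_cons, List.foldl_nil]
    rw [hst]
    exact (ih hn'.le).step (by rw [he]; exact hv.1) (by rw [he]; exact hv.2) rfl

lemma ff_packing (L : List ℝ) (hL : ValidInput L) :
    ∃ g : Fin L.length → ℕ, FFPacking L.get g (FF 3 L) := by
  have H := ffState_inv L hL L.length le_rfl
  rw [List.take_length] at H
  set g : ℕ → ℕ := fun i => ffFind 3 (L.getD i 0) (ffState 3 (L.take i)) with hg
  have hget : ∀ i : Fin L.length, L.getD i 0 = L.get i := by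
    intro i
    simp
  have hcard : ∀ b, (binOf (fun i : Fin L.length => g i) b).card =
      ((ffState 3 L).getD b (0, 0)).1 := by
    intro b
    rw [H.state b]
    simp only [binOf, card_filter]
    exact Fin.sum_univ_eq_sum_range (fun i => if g i = b then 1 else 0) L.length
  have hsum : ∀ b, ∑ i ∈ binOf (fun i : Fin L.length => g i) b, L.get i =
      ((ffState 3 L).getD b (0, 0)).2 := by
    intro b
    rw [H.state b]
    simp only [binOf, sum_filter, ← hget]
    exact Fin.sum_univ_eq_sum_range (fun i => if g i = b then L.getD i 0 else 0) L.length
  refine ⟨fun i => g i, ?_, ?_, ?_, ?_, ?_⟩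
  · exact fun i => (hL _ (List.get_mem L i)).1
  · intro b hb
    rw [← card_pos, hcard]
    exact H.pos b hb
  · intro b
    rw [hcard]
    exact H.card_le b
  · intro b
    rw [hsum]
    exact H.sum_le b
  · intro t b hb hc
    rw [hcard] at hc
    rw [hsum, ← hget]
    exact H.later t t.2 b hb hc

/-- For k = 3 and every input `L`, FF(L) ≤ (11/6)·OPT(L): the absolute
competitive ratio of First Fit for k = 3 is at most 11/6. -/
theorem ff_k3_ub (L : List ℝ) (hL : ValidInput L) :
    (FF 3 L : ℝ) ≤ (11 / 6 : ℝ) * (OPT 3 L : ℝ) := by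
  have hne : {n | ∃ f : Fin L.length → ℕ, IsFeasible 3 L f ∧ binsUsed L f = n}.Nonempty := by
    refine ⟨_, fun i => (i : ℕ), ?_, rfl⟩
    intro b
    have hc : (univ.filter (fun i : Fin L.length => (i : ℕ) = b)).card ≤ 1 :=
      card_le_one.2 fun x hx y hy => Fin.ext (by simp at hx hy; omega)
    refine ⟨hc.trans (by norm_num), ?_⟩
    refine (sum_le_card_nsmul _ _ 1 fun i _ => (hL _ (List.get_mem L i)).2).trans ?_
    rw [nsmul_one]
    exact_mod_cast hc
  obtain ⟨f, hf, hfO⟩ := Nat.sInf_mem hne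
  obtain ⟨g, H⟩ := ff_packing L hL
  have := bins_le H f (fun b => (hf b).1) (fun b => (hf b).2)
  rw [OPT, ← hfO]
  exact this
end
end

section
/- For k = 4 and every input list L, First Fit with cardinality constraint k satisfies FF(L) ≤ 2·OPT(L). That is, the absolute competitive ratio of First Fit for k = 4 is at most 2. -/
/-!
The proof is a weighting argument. An item of size `x` gets weight `4` if `x > 1/2`, weight `2` if
`1/4 < x ≤ 1/2` and weight `1` if `x ≤ 1/4`.

*Every feasible bin has weight at most `8`* (`weight_fiber_le`): without an item above `1/2` there
are at most four items of weight at most `2`; with such an item, the others have total size below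
`1/2`, so at most one of them exceeds `1/4`, and the weight is at most `4 + 2 + 1 + 1`.

*The weights of the First Fit bins sum to at least `4 · FF - 3`* (`four_mul_length_le`). A bin with
four items always has weight at least `4`. A bin of weight below `4` has at most three items and
total size at most `3/4`, so all items in later bins exceed `1/4`. Among those later bins only a
bin with a single item in `(1/4, 1/2]` has weight below `4`, and there is at most one of these
since everything after it exceeds `1/2`; its deficit is `2`. The deficit of the first light bin is
`1`, unless the total size of that bin is at most `1/2`; in that case the deficit is at most `3`
and all later bins hold items above `1/2`.

Hence `4 · FF ≤ 8 · OPT + 3`, and `FF ≤ 2 · OPT` by integrality.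
-/

open scoped Classical
noncomputable section

/-- The weight of an item of size `x`. -/
def itemWeight (x : ℝ) : ℕ := if 1 / 2 < x then 4 else if 1 / 4 < x then 2 else 1

/-- The total weight of a bin, given as the list of its item sizes. -/
def binWeight (B : List ℝ) : ℕ := (B.map itemWeight).sum

/-- The First Fit step for `k = 4` on a state that records the contents of every bin, refining
`ffUpdate`, which records only the number of items and the total size. -/
def contentsUpdate (x : ℝ) : List (List ℝ) → List (List ℝ)
  | [] => [[x]]
  | B :: bs => if B.length < 4 ∧ B.sum + x ≤ 1 then (x :: B) :: bs else B :: contentsUpdate x bs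

/-- No item of the bin `C` fits into the bin `B`, unless `B` is full by cardinality. -/
def Blocks (B C : List ℝ) : Prop := B.length < 4 → ∀ y ∈ C, 1 < B.sum + y

/-- The invariant of First Fit: bins are nonempty with positive items, and no item of a later bin
fits into an earlier one. -/
structure FFInv_s11 (bs : List (List ℝ)) : Prop where
  nonempty : ∀ B ∈ bs, B ≠ []
  pos : ∀ B ∈ bs, ∀ y ∈ B, 0 < y
  blocks : bs.Pairwise Blocks

/-! ### Item weights -/

lemma itemWeight_big {x : ℝ} (h : 1 / 2 < x) : itemWeight x = 4 := by
  simp only [itemWeight, if_pos h]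

lemma itemWeight_mid {x : ℝ} (h : 1 / 4 < x) : 2 ≤ itemWeight x := by
  unfold itemWeight; split_ifs <;> omega

lemma itemWeight_le_two {x : ℝ} (h : x ≤ 1 / 2) : itemWeight x ≤ 2 := by
  unfold itemWeight; split_ifs <;> first | omega | linarith

lemma itemWeight_small {x : ℝ} (h : x ≤ 1 / 4) : itemWeight x = 1 := by
  unfold itemWeight; split_ifs <;> first | rfl | linarith

lemma itemWeight_pos (x : ℝ) : 1 ≤ itemWeight x := by
  unfold itemWeight; split_ifs <;> omega

lemma itemWeight_cases (x : ℝ) :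
    (1 / 2 < x ∧ itemWeight x = 4) ∨ (1 / 4 < x ∧ x ≤ 1 / 2 ∧ itemWeight x = 2) ∨
      (x ≤ 1 / 4 ∧ itemWeight x = 1) := by
  unfold itemWeight
  split_ifs with h1 h2
  · exact Or.inl ⟨h1, rfl⟩
  · exact Or.inr (Or.inl ⟨h2, not_lt.1 h1, rfl⟩)
  · exact Or.inr (Or.inr ⟨not_lt.1 h2, rfl⟩)

/-! ### First Fit with recorded bin contents -/

lemma map_contentsUpdate (x : ℝ) (bs : List (List ℝ)) :
    (contentsUpdate x bs).map (fun B => (B.length, B.sum)) =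
      ffUpdate 4 x (bs.map fun B => (B.length, B.sum)) := by
  induction bs with
  | nil => simp [contentsUpdate, ffUpdate]
  | cons B bs ih =>
    by_cases h : B.length < 4 ∧ B.sum + x ≤ 1
    · simp only [contentsUpdate, ffUpdate, List.map_cons, if_pos h, List.length_cons,
        List.sum_cons, add_comm x]
    · simp only [contentsUpdate, ffUpdate, List.map_cons, if_neg h, ih]

lemma sum_binWeight_contentsUpdate (x : ℝ) (bs : List (List ℝ)) :
    ((contentsUpdate x bs).map binWeight).sum = (bs.map binWeight).sum + itemWeight x := by
  induction bs with
  | nil => simp [contentsUpdate, binWeight]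
  | cons B bs ih =>
    by_cases h : B.length < 4 ∧ B.sum + x ≤ 1
    · simp only [contentsUpdate, if_pos h, List.map_cons, List.sum_cons, binWeight]; omega
    · simp only [contentsUpdate, if_neg h, List.map_cons, List.sum_cons, ih]; omega

lemma mem_contentsUpdate {x : ℝ} {bs : List (List ℝ)} {C : List ℝ} (hC : C ∈ contentsUpdate x bs)
    {y : ℝ} (hy : y ∈ C) : y = x ∨ ∃ D ∈ bs, y ∈ D := by
  induction bs with
  | nil =>
    simp only [contentsUpdate, List.mem_singleton] at hC
    subst hC
    exact Or.inl (by simpa using hy)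
  | cons B bs ih =>
    by_cases h : B.length < 4 ∧ B.sum + x ≤ 1
    · simp only [contentsUpdate, if_pos h, List.mem_cons] at hC
      rcases hC with rfl | hC
      · rcases List.mem_cons.1 hy with h | h
        · exact Or.inl h
        · exact Or.inr ⟨B, by simp, h⟩
      · exact Or.inr ⟨C, by simp [hC], hy⟩
    · simp only [contentsUpdate, if_neg h, List.mem_cons] at hC
      rcases hC with rfl | hC
      · exact Or.inr ⟨C, by simp, hy⟩
      · rcases ih hC with h | ⟨D, hD, hyD⟩
        · exact Or.inl h
        · exact Or.inr ⟨D, by simp [hD], hyD⟩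

lemma ne_nil_of_mem_contentsUpdate {x : ℝ} {bs : List (List ℝ)} (hbs : ∀ B ∈ bs, B ≠ []) :
    ∀ C ∈ contentsUpdate x bs, C ≠ [] := by
  induction bs with
  | nil => simp [contentsUpdate]
  | cons B bs ih =>
    by_cases h : B.length < 4 ∧ B.sum + x ≤ 1
    · simp only [contentsUpdate, if_pos h]
      simp_all
    · simp only [contentsUpdate, if_neg h]
      simp_all

lemma blocks_contentsUpdate {x : ℝ} (hx : 0 < x) {bs : List (List ℝ)}
    (hbs : bs.Pairwise Blocks) : (contentsUpdate x bs).Pairwise Blocks := by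
  induction bs with
  | nil => simp [contentsUpdate]
  | cons B bs ih =>
    rw [List.pairwise_cons] at hbs
    by_cases h : B.length < 4 ∧ B.sum + x ≤ 1
    · simp only [contentsUpdate, if_pos h, List.pairwise_cons]
      refine ⟨fun C hC _ y hy => ?_, hbs.2⟩
      have := hbs.1 C hC h.1 y hy
      rw [List.sum_cons]
      linarith
    · simp only [contentsUpdate, if_neg h, List.pairwise_cons]
      refine ⟨fun C hC hB y hy => ?_, ih hbs.2⟩
      rcases mem_contentsUpdate hC hy with rfl | ⟨D, hD, hyD⟩
      · by_contra hlt
        exact h ⟨hB, not_lt.1 hlt⟩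
      · exact hbs.1 D hD hB y hyD

lemma FFInv_s11.contentsUpdate {x : ℝ} (hx : 0 < x) {bs : List (List ℝ)} (hbs : FFInv_s11 bs) :
    FFInv_s11 (contentsUpdate x bs) where
  nonempty := ne_nil_of_mem_contentsUpdate hbs.nonempty
  pos := fun C hC y hy => by
    rcases mem_contentsUpdate hC hy with rfl | ⟨D, hD, hyD⟩
    · exact hx
    · exact hbs.pos D hD y hyD
  blocks := blocks_contentsUpdate hx hbs.blocks

/-- The bin contents produced by First Fit: they refine `ffState`, carry the weight of the whole
input and satisfy the invariant. The fold is generalized over its initial state. -/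
lemma exists_contents (L : List ℝ) (hL : ∀ x ∈ L, 0 < x) (bs : List (List ℝ)) (hbs : FFInv_s11 bs) :
    ∃ cs : List (List ℝ), FFInv_s11 cs ∧
      L.foldl (fun bs x => ffUpdate 4 x bs) (bs.map fun B => (B.length, B.sum)) =
        cs.map (fun B => (B.length, B.sum)) ∧
      (cs.map binWeight).sum = (bs.map binWeight).sum + (L.map itemWeight).sum := by
  induction L generalizing bs with
  | nil => exact ⟨bs, hbs, rfl, by simp⟩
  | cons x L ih =>
    obtain ⟨cs, h1, h2, h3⟩ := ih (fun y hy => hL y (by simp [hy])) (contentsUpdate x bs)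
      (hbs.contentsUpdate (hL x (by simp)))
    refine ⟨cs, h1, ?_, ?_⟩
    · rw [List.foldl_cons, ← map_contentsUpdate, h2]
    · rw [h3, sum_binWeight_contentsUpdate, List.map_cons, List.sum_cons]; omega

/-! ### The weight of First Fit bins -/

lemma length_le_binWeight (B : List ℝ) : B.length ≤ binWeight B := by
  induction B with
  | nil => simp
  | cons x B ih =>
    have := itemWeight_pos x
    simp only [binWeight, List.map_cons, List.sum_cons, List.length_cons] at ih ⊢
    omega

lemma four_le_binWeight_of_big {B : List ℝ} (hB : B ≠ []) (h : ∀ y ∈ B, 1 / 2 < y) :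
    4 ≤ binWeight B := by
  obtain ⟨x, B, rfl⟩ := List.exists_cons_of_ne_nil hB
  have := itemWeight_big (h x (by simp))
  simp only [binWeight, List.map_cons, List.sum_cons]
  omega

lemma four_mul_length_le_of_big (bs : List (List ℝ)) (hne : ∀ B ∈ bs, B ≠ [])
    (h : ∀ B ∈ bs, ∀ y ∈ B, 1 / 2 < y) : 4 * bs.length ≤ (bs.map binWeight).sum := by
  induction bs with
  | nil => simp
  | cons B bs ih =>
    have h1 := ih (fun C hC => hne C (by simp [hC])) (fun C hC => h C (by simp [hC]))
    have h2 := four_le_binWeight_of_big (hne B (by simp)) (h B (by simp))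
    simp only [List.length_cons, List.map_cons, List.sum_cons]
    omega

/-- When all items exceed `1/4`, only a bin with a single item at most `1/2` is light, and all
items after it exceed `1/2`. -/
lemma four_mul_length_le_of_mid (bs : List (List ℝ)) (hbs : FFInv_s11 bs)
    (h : ∀ B ∈ bs, ∀ y ∈ B, 1 / 4 < y) : 4 * bs.length ≤ (bs.map binWeight).sum + 2 := by
  induction bs with
  | nil => simp
  | cons B bs ih =>
    have hpw := List.pairwise_cons.1 hbs.blocks
    have hne : ∀ C ∈ bs, C ≠ [] := fun C hC => hbs.nonempty C (by simp [hC])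
    have h1 := ih ⟨hne, fun C hC => hbs.pos C (by simp [hC]), hpw.2⟩
      (fun C hC => h C (by simp [hC]))
    simp only [List.length_cons, List.map_cons, List.sum_cons]
    by_cases hw : 4 ≤ binWeight B
    · omega
    have hB := hbs.nonempty B (by simp)
    match B, hB with
    | x :: y :: B, _ =>
      have hx := itemWeight_mid (h _ (List.mem_cons_self) x (by simp))
      have hy := itemWeight_mid (h _ (List.mem_cons_self) y (by simp))
      simp only [binWeight, List.map_cons, List.sum_cons] at hw
      omega
    | [x], _ =>
      have hx := itemWeight_mid (h _ (List.mem_cons_self) x (by simp))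
      have hx2 : x ≤ 1 / 2 := by
        by_contra hlt
        have := itemWeight_big (not_le.1 hlt)
        simp [binWeight] at hw
        omega
      have h2 := four_mul_length_le_of_big bs hne (fun C hC y hy => by
        have := hpw.1 C hC (by simp) y hy
        simp only [List.sum_singleton] at this
        linarith)
      simp only [binWeight, List.map_cons, List.map_nil, List.sum_singleton] at hx ⊢
      omega

/-- A light bin has at most three items, and either its deficit is `1` and its total size is at
most `3/4`, or its total size is at most `1/2`. -/
lemma light_bin {B : List ℝ} (hB : B ≠ []) (hw : binWeight B < 4) :
    B.length < 4 ∧ 1 ≤ binWeight B ∧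
      (binWeight B = 3 ∧ B.sum ≤ 3 / 4 ∨ B.sum ≤ 1 / 2) := by
  have hlen := length_le_binWeight B
  refine ⟨by omega, ?_, ?_⟩
  · have := List.length_pos_iff.2 hB
    omega
  match B, hB with
  | [x], _ =>
    simp only [binWeight, List.map_cons, List.map_nil, List.sum_cons, List.sum_nil] at hw ⊢
    rcases itemWeight_cases x with ⟨h, e⟩ | ⟨h, h', e⟩ | ⟨h, e⟩
    · omega
    · right; linarith
    · right; linarith
  | [x, y], _ =>
    simp only [binWeight, List.map_cons, List.map_nil, List.sum_cons, List.sum_nil] at hw ⊢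
    rcases itemWeight_cases x with ⟨h, e⟩ | ⟨h, h', e⟩ | ⟨h, e⟩ <;>
    rcases itemWeight_cases y with ⟨g, f⟩ | ⟨g, g', f⟩ | ⟨g, f⟩ <;>
    first
    | omega
    | exact Or.inl ⟨by omega, by linarith⟩
    | exact Or.inr (by linarith)
  | [x, y, z], _ =>
    have hx := itemWeight_pos x
    have hy := itemWeight_pos y
    have hz := itemWeight_pos z
    simp only [binWeight, List.map_cons, List.map_nil, List.sum_cons, List.sum_nil] at hw ⊢
    rcases itemWeight_cases x with ⟨h, e⟩ | ⟨h, h', e⟩ | ⟨h, e⟩ <;> try omega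
    rcases itemWeight_cases y with ⟨g, f⟩ | ⟨g, g', f⟩ | ⟨g, f⟩ <;> try omega
    rcases itemWeight_cases z with ⟨k, l⟩ | ⟨k, k', l⟩ | ⟨k, l⟩ <;> try omega
    exact Or.inl ⟨by omega, by linarith⟩
  | x :: y :: z :: t :: B, _ =>
    simp only [List.length_cons] at hlen
    omega

lemma four_mul_length_le (bs : List (List ℝ)) (hbs : FFInv_s11 bs) :
    4 * bs.length ≤ (bs.map binWeight).sum + 3 := by
  induction bs with
  | nil => simp
  | cons B bs ih =>
    have hpw := List.pairwise_cons.1 hbs.blocks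
    have hne : ∀ C ∈ bs, C ≠ [] := fun C hC => hbs.nonempty C (by simp [hC])
    have hinv : FFInv_s11 bs := ⟨hne, fun C hC => hbs.pos C (by simp [hC]), hpw.2⟩
    simp only [List.length_cons, List.map_cons, List.sum_cons]
    by_cases hw : 4 ≤ binWeight B
    · have := ih hinv
      omega
    obtain ⟨hlen, hpos, ⟨h3, hs⟩ | hs⟩ := light_bin (hbs.nonempty B (by simp)) (not_le.1 hw)
    · have := four_mul_length_le_of_mid bs hinv (fun C hC y hy => by
        have := hpw.1 C hC hlen y hy
        linarith)
      omega
    · have := four_mul_length_le_of_big bs hne (fun C hC y hy => by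
        have := hpw.1 C hC hlen y hy
        linarith)
      omega

/-! ### The weight of a feasible bin -/

lemma weight_fiber_le {ι : Type*} (s : Finset ι) (a : ι → ℝ) (hpos : ∀ i, 0 < a i)
    (hcard : s.card ≤ 4) (hsum : ∑ i ∈ s, a i ≤ 1) : ∑ i ∈ s, itemWeight (a i) ≤ 8 := by
  by_cases hbig : ∃ i ∈ s, 1 / 2 < a i
  · obtain ⟨i, hi, hai⟩ := hbig
    have hc := Finset.card_erase_of_mem hi
    rw [← Finset.add_sum_erase s _ hi] at hsum ⊢
    rw [itemWeight_big hai]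
    by_cases hmid : ∃ j ∈ s.erase i, 1 / 4 < a j
    · obtain ⟨j, hj, haj⟩ := hmid
      have hc' := Finset.card_erase_of_mem hj
      rw [← Finset.add_sum_erase _ _ hj] at hsum ⊢
      have hj2 : a j ≤ 1 / 2 := by
        have := Finset.sum_nonneg (s := (s.erase i).erase j) (fun l _ => (hpos l).le)
        linarith
      have hrest : ∑ l ∈ (s.erase i).erase j, itemWeight (a l) ≤ ((s.erase i).erase j).card • 1 :=
        Finset.sum_le_card_nsmul _ _ _ fun l hl => by
          have := Finset.single_le_sum (f := a) (fun m _ => (hpos m).le) hl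
          exact (itemWeight_small (by linarith)).le
      have := itemWeight_le_two hj2
      simp only [smul_eq_mul, mul_one] at hrest
      omega
    · push Not at hmid
      have hrest : ∑ l ∈ s.erase i, itemWeight (a l) ≤ (s.erase i).card • 1 :=
        Finset.sum_le_card_nsmul _ _ _ fun l hl => (itemWeight_small (hmid l hl)).le
      simp only [smul_eq_mul, mul_one] at hrest
      omega
  · push Not at hbig
    have := Finset.sum_le_card_nsmul s (fun i => itemWeight (a i)) 2
      fun i hi => itemWeight_le_two (hbig i hi)
    simp only [smul_eq_mul] at this
    omega

lemma sum_itemWeight_le_binsUsed (L : List ℝ) (hL : ValidInput L) (f : Fin L.length → ℕ)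
    (hf : IsFeasible 4 L f) : (L.map itemWeight).sum ≤ 8 * binsUsed L f := by
  have h1 : (L.map itemWeight).sum = ∑ i : Fin L.length, itemWeight (L.get i) := by
    simp
  rw [h1, ← Finset.sum_fiberwise_of_maps_to (s := Finset.univ) (t := Finset.univ.image f) (g := f)
    (fun i hi => Finset.mem_image_of_mem f hi)]
  have := Finset.sum_le_card_nsmul (Finset.univ.image f)
    (fun b => ∑ i ∈ Finset.univ.filter (fun i => f i = b), itemWeight (L.get i)) 8
    fun b _ => weight_fiber_le _ _ (fun i => (hL _ (L.get_mem i)).1) (hf b).1 (hf b).2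
  rw [smul_eq_mul, mul_comm] at this
  exact this

/-- The infimum defining `OPT` is attained, since packing every item alone is feasible. -/
lemma exists_optimal (L : List ℝ) (hL : ValidInput L) :
    ∃ f : Fin L.length → ℕ, IsFeasible 4 L f ∧ binsUsed L f = OPT 4 L := by
  refine Nat.sInf_mem (s := {n | ∃ f : Fin L.length → ℕ, IsFeasible 4 L f ∧ binsUsed L f = n})
    ⟨_, fun i => i.1, fun b => ?_, rfl⟩
  have hcard : (Finset.univ.filter (fun i : Fin L.length => i.1 = b)).card ≤ 1 :=
    Finset.card_le_one.2 fun i hi j hj => Fin.ext (by simp at hi hj; omega)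
  refine ⟨hcard.trans (by norm_num), ?_⟩
  have h := Finset.sum_le_card_nsmul (Finset.univ.filter (fun i : Fin L.length => i.1 = b))
    (fun i => L.get i) 1 fun i _ => (hL _ (L.get_mem i)).2
  rw [nsmul_eq_mul, mul_one] at h
  exact h.trans (by exact_mod_cast hcard)

/-- For k = 4 and every input `L`, FF(L) ≤ 2·OPT(L): the absolute
competitive ratio of First Fit for k = 4 is at most 2. -/
theorem ff_k4_ub (L : List ℝ) (hL : ValidInput L) :
    (FF 4 L : ℝ) ≤ 2 * (OPT 4 L : ℝ) := by
  obtain ⟨cs, hinv, hstate, hweight⟩ :=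
    exists_contents L (fun x hx => (hL x hx).1) [] ⟨by simp, by simp, by simp⟩
  obtain ⟨f, hf, hopt⟩ := exists_optimal L hL
  have hFF : FF 4 L = cs.length := by
    have := congrArg List.length hstate
    simpa [FF, ffState] using this
  have h1 := four_mul_length_le cs hinv
  have h2 := sum_itemWeight_le_binsUsed L hL f hf
  simp only [List.map_nil, List.sum_nil, zero_add] at hweight
  have h3 : FF 4 L ≤ 2 * OPT 4 L := by omega
  exact_mod_cast h3
end
end
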